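/- Let X be a finite set of even cardinality |X| ≥ 4, let M be a uniformly random partition of X into pairs, and let F be any set of 2-element subsets of X. If Z = |F ∩ M|, then the variance of Z is at most |X|, provided |F| ≤ |X|(|X|−1)/4. -/

import Mathlib

open ProbabilityTheory

/-- `M` is a partition of the (finite) vertex type `V` into pairs. -/
def IsPerfectPairing {V : Type*} (M : Finset (Finset V)) : Prop :=
  (∀ p ∈ M, p.card = 2) ∧ ∀ v : V, ∃! p, p ∈ M ∧ v ∈ p

open Finset in
lemma act_mem {V : Type*} [DecidableEq V] (x y : V) (M : Finset (Finset V)) (p : Finset V) :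
    p ∈ M.image (fun q => q.image (Equiv.swap x y)) ↔ p.image (Equiv.swap x y) ∈ M := by
  have hh : ∀ q : Finset V, (q.image (Equiv.swap x y)).image (Equiv.swap x y) = q := by
    intro q
    rw [Finset.image_image]
    ext z; simp
  constructor
  · intro h
    obtain ⟨q, hq, rfl⟩ := Finset.mem_image.1 h
    rwa [hh]
  · intro h
    exact Finset.mem_image.2 ⟨_, h, hh p⟩

lemma act_inj {V : Type*} [DecidableEq V] (x y : V) :
    Function.Injective
      (fun M : Finset (Finset V) => M.image (fun q => q.image (Equiv.swap x y))) :=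
  Finset.image_injective (Finset.image_injective (Equiv.swap x y).injective)

lemma act_pairing {V : Type*} [DecidableEq V] (x y : V) (M : Finset (Finset V))
    (hM : IsPerfectPairing M) :
    IsPerfectPairing (M.image (fun q => q.image (Equiv.swap x y))) := by
  refine ⟨?_, ?_⟩
  · intro p hp
    rw [act_mem] at hp
    rw [← hM.1 _ hp, Finset.card_image_of_injective _ (Equiv.swap x y).injective]
  · intro v
    obtain ⟨p, ⟨hp, hv⟩, hu⟩ := hM.2 (Equiv.swap x y v)
    refine ⟨p.image (Equiv.swap x y), ⟨Finset.mem_image_of_mem _ hp, ?_⟩, ?_⟩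
    · exact Finset.mem_image.2 ⟨_, hv, by simp⟩
    · rintro q ⟨hq, hvq⟩
      rw [act_mem] at hq
      rw [← hu _ ⟨hq, Finset.mem_image_of_mem _ hvq⟩, Finset.image_image]
      symm
      ext z; simp

open Classical in
lemma count_lemma {V : Type*} [Fintype V] [DecidableEq V] (S : Finset V) (u : V)
    (T : Finset (Finset (Finset V)))
    (hT : ∀ M ∈ T, IsPerfectPairing M)
    (hinv : ∀ x y, x ∉ S → y ∉ S → ∀ M ∈ T, M.image (fun q => q.image (Equiv.swap x y)) ∈ T)
    (huS : u ∈ S)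
    (hout : ∀ M ∈ T, ∀ x ∈ S, ({u, x} : Finset V) ∉ M)
    (x : V) (hx : x ∉ S) :
    (T.filter (fun M => ({u, x} : Finset V) ∈ M)).card * (Fintype.card V - S.card) = T.card := by
  have hle : ∀ x y, x ∉ S → y ∉ S → (T.filter (fun M => ({u, x} : Finset V) ∈ M)).card ≤
      (T.filter (fun M => ({u, y} : Finset V) ∈ M)).card := by
    intro x y hx hy
    apply Finset.card_le_card_of_injOn
      (fun M : Finset (Finset V) => M.image (fun q => q.image (Equiv.swap x y)))
    · intro M hM
      simp only [Finset.coe_filter, Set.mem_ofPred_eq] at hM ⊢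
      refine ⟨hinv x y hx hy M hM.1, ?_⟩
      rw [act_mem]
      have h1 : u ≠ x := fun h => hx (h ▸ huS)
      have h2 : u ≠ y := fun h => hy (h ▸ huS)
      simpa [Finset.image_insert, Equiv.swap_apply_of_ne_of_ne h1 h2] using hM.2
    · exact (act_inj x y).injOn
  have hsum : T.card = ∑ y ∈ Sᶜ, (T.filter (fun M => ({u, y} : Finset V) ∈ M)).card := by
    rw [← Finset.card_biUnion]
    · congr 1
      ext M
      simp only [Finset.mem_biUnion, Finset.mem_filter, Finset.mem_compl]
      constructor
      · intro hM
        obtain ⟨p, ⟨hp, hup⟩, -⟩ := (hT M hM).2 u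
        obtain ⟨a, b, hab, rfl⟩ := Finset.card_eq_two.1 ((hT M hM).1 p hp)
        simp only [Finset.mem_insert, Finset.mem_singleton] at hup
        rcases hup with rfl | rfl
        · exact ⟨b, fun h => hout M hM b h hp, hM, hp⟩
        · rw [Finset.pair_comm] at hp
          exact ⟨a, fun h => hout M hM a h hp, hM, hp⟩
      · rintro ⟨y, -, h, -⟩
        exact h
    · intro y hy z hz hyz
      rw [Function.onFun, Finset.disjoint_left]
      intro M h1 h2
      rw [Finset.mem_filter] at h1 h2
      have := ((hT M h1.1).2 u).unique ⟨h1.2, by simp⟩ ⟨h2.2, by simp⟩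
      have hy' : y ∈ ({u, z} : Finset V) := this ▸ (by simp)
      simp only [Finset.mem_insert, Finset.mem_singleton] at hy'
      rcases hy' with h | h
      · simp only [Finset.coe_compl, Set.mem_compl_iff, Finset.mem_coe] at hy
        exact hy (h ▸ huS)
      · exact hyz h
  rw [hsum, Finset.sum_const_nat (m := (T.filter (fun M => ({u, x} : Finset V) ∈ M)).card),
    Finset.card_compl, mul_comm]
  intro y hy
  rw [Finset.mem_compl] at hy
  exact le_antisymm (hle _ _ hy hx) (hle _ _ hx hy)

open Classical in
lemma count_one {V : Type*} [Fintype V] [DecidableEq V] (T : Finset (Finset (Finset V)))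
    (hT : ∀ M, M ∈ T ↔ IsPerfectPairing M) (e : Finset V) (he : e.card = 2) :
    (T.filter (fun M => e ∈ M)).card * (Fintype.card V - 1) = T.card := by
  obtain ⟨a, b, hab, rfl⟩ := Finset.card_eq_two.1 he
  have := count_lemma {a} a T (fun M h => (hT M).1 h)
    (fun x y _ _ M hM => (hT _).2 (act_pairing x y M ((hT M).1 hM))) (by simp)
    (by
      intro M hM x hx h
      rw [Finset.mem_singleton] at hx
      subst hx
      have := ((hT M).1 hM).1 _ h
      simp at this) b (by simpa using hab.symm)
  simpa using this

open Classical in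
lemma count_two {V : Type*} [Fintype V] [DecidableEq V] (T : Finset (Finset (Finset V)))
    (hT : ∀ M, M ∈ T ↔ IsPerfectPairing M) (e f : Finset V) (he : e.card = 2) (hf : f.card = 2)
    (hef : Disjoint e f) :
    (T.filter (fun M => e ∈ M ∧ f ∈ M)).card * (Fintype.card V - 3) =
      (T.filter (fun M => e ∈ M)).card := by
  obtain ⟨u, x, hux, rfl⟩ := Finset.card_eq_two.1 hf
  have hu : u ∉ e := fun h => Finset.disjoint_left.1 hef h (by simp)
  have hx : x ∉ e := fun h => Finset.disjoint_left.1 hef h (by simp)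
  have := count_lemma (insert u e) u (T.filter (fun M => e ∈ M))
    (fun M h => (hT M).1 (Finset.mem_filter.1 h).1)
    (by
      intro y z hy hz M hM
      rw [Finset.mem_filter] at hM ⊢
      refine ⟨(hT _).2 (act_pairing y z M ((hT M).1 hM.1)), ?_⟩
      rw [act_mem]
      have : e.image (Equiv.swap y z) = e := by
        conv_rhs => rw [← Finset.image_id (s := e)]
        apply Finset.image_congr
        intro w hw
        simp only [Finset.mem_insert, not_or] at hy hz
        exact Equiv.swap_apply_of_ne_of_ne (fun h => hy.2 (h ▸ hw)) (fun h => hz.2 (h ▸ hw))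
      rw [this]
      exact hM.2) (by simp)
    (by
      intro M hM w hw h
      rw [Finset.mem_filter, hT] at hM
      rw [Finset.mem_insert] at hw
      rcases hw with rfl | hw
      · have := hM.1.1 _ h
        simp at this
      · have := (hM.1.2 w).unique ⟨h, by simp⟩ ⟨hM.2, hw⟩
        exact hu (this ▸ (by simp))) x (by simp [hx, hux.symm])
  rw [Finset.card_insert_of_notMem hu, he, Finset.filter_filter] at this
  exact this

open Classical in
lemma sum_bound {V : Type*} [Fintype V] [DecidableEq V] (hcard : 4 ≤ Fintype.card V)
    (T : Finset (Finset (Finset V)))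
    (hT : ∀ M, M ∈ T ↔ IsPerfectPairing M) (F : Finset (Finset V)) (hF2 : ∀ e ∈ F, e.card = 2) :
    (∑ M ∈ T, ((F ∩ M).card : ℝ) = F.card * (T.card / ((Fintype.card V : ℝ) - 1))) ∧
    (∑ M ∈ T, ((F ∩ M).card : ℝ) ^ 2 ≤ F.card * (T.card / ((Fintype.card V : ℝ) - 1)) +
      F.card ^ 2 * (T.card / ((Fintype.card V : ℝ) - 1) / ((Fintype.card V : ℝ) - 3))) := by
  have hN : (4 : ℝ) ≤ Fintype.card V := by exact_mod_cast hcard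
  have h1 : ∀ e ∈ F, ((T.filter (fun M => e ∈ M)).card : ℝ) =
      T.card / ((Fintype.card V : ℝ) - 1) := by
    intro e he
    rw [eq_div_iff (by linarith), ← count_one T hT e (hF2 e he)]
    push_cast [Nat.cast_sub (show 1 ≤ Fintype.card V by omega)]
    rfl
  have h2 : ∀ e ∈ F, ∀ f ∈ F, ((T.filter (fun M => e ∈ M ∧ f ∈ M)).card : ℝ) ≤
      (if e = f then T.card / ((Fintype.card V : ℝ) - 1) else 0) +
       T.card / ((Fintype.card V : ℝ) - 1) / ((Fintype.card V : ℝ) - 3) := by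
    intro e he f hf
    have hpos : (0 : ℝ) ≤ T.card / ((Fintype.card V : ℝ) - 1) / ((Fintype.card V : ℝ) - 3) :=
      div_nonneg (div_nonneg (by positivity) (by linarith)) (by linarith)
    split_ifs with hef
    · subst hef
      simp only [and_self]
      rw [h1 e he]
      linarith
    · rw [zero_add]
      by_cases hd : Disjoint e f
      · rw [le_div_iff₀ (by linarith), ← h1 e he, ← count_two T hT e f (hF2 e he) (hF2 f hf) hd]
        push_cast [Nat.cast_sub (show 3 ≤ Fintype.card V by omega)]
        rfl
      · rw [Finset.card_eq_zero.2]
        · simpa using hpos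
        · rw [Finset.filter_eq_empty_iff]
          rintro M hM ⟨h3, h4⟩
          obtain ⟨v, hv1, hv2⟩ := Finset.not_disjoint_iff.1 hd
          exact hef ((((hT M).1 hM).2 v).unique ⟨h3, hv1⟩ ⟨h4, hv2⟩)
  have hc : ∀ M : Finset (Finset V), ((F ∩ M).card : ℝ) = ∑ e ∈ F, if e ∈ M then 1 else 0 := by
    intro M
    rw [← Finset.filter_mem_eq_inter, Finset.card_filter]
    push_cast
    exact Finset.sum_congr rfl fun e _ => by split_ifs <;> rfl
  constructor
  · simp_rw [hc]
    rw [Finset.sum_comm]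
    rw [← nsmul_eq_mul]
    apply Finset.sum_eq_card_nsmul
    intro e he
    rw [← h1 e he]
    simp
  · have : ∑ M ∈ T, ((F ∩ M).card : ℝ) ^ 2 =
        ∑ e ∈ F, ∑ f ∈ F, ((T.filter (fun M => e ∈ M ∧ f ∈ M)).card : ℝ) := by
      simp_rw [hc, sq, Finset.sum_mul_sum]
      rw [Finset.sum_comm]
      refine Finset.sum_congr rfl fun e _ => ?_
      rw [Finset.sum_comm]
      refine Finset.sum_congr rfl fun f _ => ?_
      rw [Finset.card_filter]
      push_cast
      refine Finset.sum_congr rfl fun M _ => ?_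
      by_cases h3 : e ∈ M <;> by_cases h4 : f ∈ M <;> simp [h3, h4]
    rw [this]
    refine (Finset.sum_le_sum fun e he => Finset.sum_le_sum fun f hf => h2 e he f hf).trans ?_
    apply le_of_eq
    simp only [Finset.sum_add_distrib, Finset.sum_ite_eq, Finset.sum_const, nsmul_eq_mul]
    rw [Finset.sum_congr rfl (g := fun _ => (T.card : ℝ) / ((Fintype.card V : ℝ) - 1))
      (fun e he => by simp [he])]
    rw [Finset.sum_const, nsmul_eq_mul]
    ring

lemma final_arith (N m c : ℝ) (hN : 4 ≤ N) (hm : 0 ≤ m) (hmN : 4 * m ≤ N * (N - 1)) (hc : 0 < c)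
    (A B : ℝ) (hA : A = m * (c / (N - 1)))
    (hB : B ≤ m * (c / (N - 1)) + m ^ 2 * (c / (N - 1) / (N - 3))) :
    c⁻¹ * B - (c⁻¹ * A) ^ 2 ≤ N := by
  have e1 : c⁻¹ * A = m / (N - 1) := by rw [hA]; field_simp
  have e2 : c⁻¹ * B ≤ m / (N - 1) + (m / (N - 1)) ^ 2 * ((N - 1) / (N - 3)) := by
    have h1 : N - 1 ≠ 0 := by linarith
    have h3 : N - 3 ≠ 0 := by linarith
    calc c⁻¹ * B ≤ c⁻¹ * (m * (c / (N - 1)) + m ^ 2 * (c / (N - 1) / (N - 3))) := by gcongr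
      _ = _ := by field_simp
  rw [e1]
  set t := m / (N - 1) with ht
  have ht0 : 0 ≤ t := div_nonneg hm (by linarith)
  have ht1 : t ≤ N / 4 := by
    rw [ht, div_le_iff₀ (by linarith)]; linarith
  have e3 : t ^ 2 * ((N - 1) / (N - 3)) = t ^ 2 + t ^ 2 * (2 / (N - 3)) := by
    have h3 : N - 3 ≠ 0 := by linarith
    field_simp; ring
  have e4 : t ^ 2 * (2 / (N - 3)) ≤ (N / 4) ^ 2 * (2 / (N - 3)) := by
    have : 0 ≤ 2 / (N - 3) := div_nonneg (by norm_num) (by linarith)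
    gcongr
  have e5 : (N / 4) ^ 2 * (2 / (N - 3)) ≤ 3 * N / 4 := by
    rw [mul_div_assoc', div_le_iff₀ (by linarith)]
    nlinarith
  linarith

open Classical in
lemma integral_unif {α : Type*} [Fintype α] [MeasurableSpace α] [MeasurableSingletonClass α]
    (T : Finset α) (hne : T.Nonempty) (f : α → ℝ) :
    ∫ x, f x ∂(uniformOn (T : Set α)) = (T.card : ℝ)⁻¹ * ∑ x ∈ T, f x := by
  have : MeasureTheory.IsProbabilityMeasure (uniformOn (T : Set α)) :=
    isProbabilityMeasure_uniformOn T.finite_toSet (by simpa using hne)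
  rw [MeasureTheory.integral_fintype .of_finite, Finset.mul_sum]
  rw [← Finset.sum_subset (Finset.subset_univ T)]
  · refine Finset.sum_congr rfl fun x hx => ?_
    rw [smul_eq_mul, MeasureTheory.measureReal_def, uniformOn,
      cond_apply T.measurableSet, Set.inter_singleton_of_mem (by simpa using hx)]
    simp
  · intro x _ hx
    rw [MeasureTheory.measureReal_def, uniformOn,
      cond_apply T.measurableSet]
    simp [hx]

/-- Let `X` be a finite set of even cardinality `|X| ≥ 4`, let `M` be a uniformly
random partition of `X` into pairs, and let `F` be a family of two-element subsets of
`X` with `|F| ≤ |X|(|X|-1)/4`.  Then the variance of `Z = |F ∩ M|` is at most `|X|`. -/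
theorem stmt_10 {V : Type*} [Fintype V] [DecidableEq V]
    [MeasurableSpace (Finset (Finset V))] [MeasurableSingletonClass (Finset (Finset V))]
    (hcard : 4 ≤ Fintype.card V) (heven : Even (Fintype.card V))
    (F : Finset (Finset V)) (hF2 : ∀ e ∈ F, e.card = 2)
    (hFsize : 4 * F.card ≤ Fintype.card V * (Fintype.card V - 1)) :
    variance (fun M : Finset (Finset V) => ((F ∩ M).card : ℝ))
        (uniformOn {M | IsPerfectPairing M}) ≤ Fintype.card V := by
  classical
  obtain ⟨T, hT⟩ : ∃ T : Finset (Finset (Finset V)), ∀ M, M ∈ T ↔ IsPerfectPairing M :=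
    ⟨Finset.univ.filter (fun M => IsPerfectPairing M), by simp⟩
  have hset : {M : Finset (Finset V) | IsPerfectPairing M} = (T : Set (Finset (Finset V))) := by
    ext M; simp [hT]
  rw [hset]
  rcases T.eq_empty_or_nonempty with rfl | hne
  · simp
  have : MeasureTheory.IsProbabilityMeasure (uniformOn (T : Set (Finset (Finset V)))) :=
    isProbabilityMeasure_uniformOn T.finite_toSet (by simpa using hne)
  rw [variance_eq_sub .of_discrete]
  simp only [Pi.pow_apply]
  rw [integral_unif T hne, integral_unif T hne]
  obtain ⟨hA, hB⟩ := sum_bound hcard T hT F hF2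
  have hsz : (4 : ℝ) * F.card ≤ Fintype.card V * ((Fintype.card V : ℝ) - 1) := by
    have : ((4 * F.card : ℕ) : ℝ) ≤ ((Fintype.card V * (Fintype.card V - 1) : ℕ) : ℝ) := by
      exact_mod_cast hFsize
    push_cast [Nat.cast_sub (show 1 ≤ Fintype.card V by omega)] at this
    exact this
  exact final_arith _ _ _ (by exact_mod_cast hcard) (by positivity) hsz
    (by exact_mod_cast hne.card_pos) _ _ hA hB
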